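/- arXiv:1808.01842 — 3 statements merged into one kernel-verified Lean document; each statement's English description precedes it below -/
import Mathlib

section
/- Let p ≥ 1 and k ≥ 1 be integers, let f : Finset E → ℝ be non-negative, monotone, submodular, and let O be a finset with |O| ≤ k and f(O) = OPT. Let ∅ = S₀ ⊆ S₁ ⊆ ⋯ ⊆ S_p be finsets with |S_p| ≤ k such that for every 1 ≤ j ≤ p: (i) f(S_j) ≥ f(S_{j−1}) + (|S_j| − |S_{j−1}|) · (p/(p+1))^j · OPT/k; and (ii) if |S_j| < k then f(o|S_j) ≤ (p/(p+1))^j · OPT/k for every o ∈ O. Then f(S_p) ≥ (1 − (p/(p+1))^p) · OPT. (This is the guarantee of the p-pass algorithm, whose i-th pass over the stream adds any element with marginal gain at least (p/(p+1))^i·OPT/k while fewer than k elements are selected.) -/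
/-!
Write `q = p / (p + 1)` and `a j = |S j| / k`. The crux is the invariant
`f (S j) ≥ OPT * (1 - q ^ j + (a j - j / p) * q ^ j)` for `0 ≤ j ≤ p`: the benchmark is a run that
picks `k / p` elements per pass, and every element beyond this pace is worth the current threshold.

The inductive step rests on the identity `q ^ j - q ^ (j + 1) = q ^ (j + 1) / p`. If pass `j` is at
or ahead of the pace (`a j ≥ j / p`), the surplus only loses value when the threshold drops, so the
invariant at `j` together with `h1` suffices. If it is behind the pace, then `a j < 1`, and
submodularity with `h2` gives `f (S j) ≥ (1 - q ^ j) * OPT` directly (`le_of_gain_le`), which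
replaces the invariant at `j`.

At `j = p` the invariant gives the bound when `|S p| = k`; when `|S p| < k`, `h2` gives it through
`le_of_gain_le`.
-/

open Finset

/-- For a submodular `f`, if every element of `T` has marginal gain at most `c ≥ 0` over `A`, then
adding all of `T` to `A` gains at most `|T| * c`. -/
lemma f_union_le_of_gain_le {E : Type*} [DecidableEq E] (f : Finset E → ℝ)
    (hsubmod : ∀ X Y : Finset E, X ⊆ Y → ∀ e ∉ Y,
      f (insert e Y) - f Y ≤ f (insert e X) - f X)
    (A : Finset E) (c : ℝ) (hc : 0 ≤ c) (T : Finset E)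
    (hT : ∀ o ∈ T, f (insert o A) - f A ≤ c) :
    f (A ∪ T) ≤ f A + (T.card : ℝ) * c := by
  induction T using Finset.induction_on with
  | empty => simp
  | insert e T he ih =>
    have ih' := ih fun o ho => hT o (mem_insert_of_mem ho)
    rw [union_insert, card_insert_of_notMem he]
    push_cast
    by_cases h : e ∈ A ∪ T
    · rw [insert_eq_of_mem h]
      linarith
    · have := hsubmod A (A ∪ T) subset_union_left e h
      have := hT e (mem_insert_self e T)
      linarith

/-- If every element of a set `O` of at most `k` elements has marginal gain at most `r * f O / k`
over `A`, then `A` has value at least `(1 - r) * f O`. -/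
lemma le_of_gain_le {E : Type*} [DecidableEq E] (k : ℕ) (hk : 1 ≤ k) (f : Finset E → ℝ)
    (hnonneg : ∀ X : Finset E, 0 ≤ f X)
    (hmono : ∀ X Y : Finset E, X ⊆ Y → f X ≤ f Y)
    (hsubmod : ∀ X Y : Finset E, X ⊆ Y → ∀ e ∉ Y,
      f (insert e Y) - f Y ≤ f (insert e X) - f X)
    (O : Finset E) (hOcard : O.card ≤ k) (A : Finset E) (r : ℝ) (hr : 0 ≤ r)
    (hgain : ∀ o ∈ O, f (insert o A) - f A ≤ r * f O / k) :
    (1 - r) * f O ≤ f A := by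
  have hk0 : (0 : ℝ) < k := by exact_mod_cast hk
  have hc : 0 ≤ r * f O / k := div_nonneg (mul_nonneg hr (hnonneg O)) hk0.le
  have hle := f_union_le_of_gain_le f hsubmod A _ hc O hgain
  have hO := hmono O (A ∪ O) subset_union_right
  have hcard : (O.card : ℝ) * (r * f O / k) ≤ k * (r * f O / k) :=
    mul_le_mul_of_nonneg_right (by exact_mod_cast hOcard) hc
  rw [mul_div_cancel₀ _ hk0.ne'] at hcard
  linarith

/-- Guarantee of the p-pass algorithm: `f (S p) ≥ (1 − (p/(p+1))^p)·OPT`. -/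
theorem stmt_2 {E : Type*} [DecidableEq E]
    (p k : ℕ) (hp : 1 ≤ p) (hk : 1 ≤ k)
    (f : Finset E → ℝ)
    (hnonneg : ∀ X : Finset E, 0 ≤ f X)
    (hmono : ∀ X Y : Finset E, X ⊆ Y → f X ≤ f Y)
    (hsubmod : ∀ X Y : Finset E, X ⊆ Y → ∀ e ∉ Y,
      f (insert e Y) - f Y ≤ f (insert e X) - f X)
    (O : Finset E) (OPT : ℝ) (hOcard : O.card ≤ k) (hOPT : f O = OPT)
    (S : ℕ → Finset E) (hS0 : S 0 = ∅)
    (hchain : ∀ j, 1 ≤ j → j ≤ p → S (j - 1) ⊆ S j)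
    (hcard : (S p).card ≤ k)
    (h1 : ∀ j, 1 ≤ j → j ≤ p →
      f (S j) ≥ f (S (j - 1)) +
        (((S j).card : ℝ) - ((S (j - 1)).card : ℝ)) *
          (((p : ℝ) / (p + 1)) ^ j * OPT / k))
    (h2 : ∀ j, 1 ≤ j → j ≤ p → (S j).card < k →
      ∀ o ∈ O, f (insert o (S j)) - f (S j) ≤ ((p : ℝ) / (p + 1)) ^ j * OPT / k) :
    f (S p) ≥ (1 - ((p : ℝ) / (p + 1)) ^ p) * OPT := by
  subst hOPT
  have hk0 : (0 : ℝ) < k := by exact_mod_cast hk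
  have hp0 : (0 : ℝ) < p := by exact_mod_cast hp
  set q : ℝ := (p : ℝ) / (p + 1) with hq
  have hq0 : 0 ≤ q := by positivity
  have hqp : 1 - q = q / p := by
    rw [hq]
    field_simp
    ring
  have hOPT0 := hnonneg O
  have hcert : ∀ j, 1 ≤ j → j ≤ p → (S j).card < k → (1 - q ^ j) * f O ≤ f (S j) :=
    fun j hj hjp hlt => le_of_gain_le k hk f hnonneg hmono hsubmod O hOcard (S j) (q ^ j)
      (pow_nonneg hq0 j) (h2 j hj hjp hlt)
  have hinv : ∀ j, j ≤ p →
      f O * (1 - q ^ j + (((S j).card : ℝ) / k - (j : ℝ) / p) * q ^ j) ≤ f (S j) := by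
    intro j
    induction j with
    | zero =>
      intro _
      simpa [hS0] using hnonneg ∅
    | succ j ih =>
      intro hjp
      have ih' := ih (by omega)
      have hstep := h1 (j + 1) (by omega) hjp
      rw [Nat.add_sub_cancel] at hstep
      have hpow : q ^ j - q ^ (j + 1) = q ^ (j + 1) / p := by
        rw [pow_succ]
        linear_combination q ^ j * hqp
      have hQ : 0 ≤ q ^ (j + 1) := pow_nonneg hq0 _
      have hsplit : (((S (j + 1)).card : ℝ) - ((S j).card : ℝ)) * (q ^ (j + 1) * f O / k)
          = f O * (((S (j + 1)).card : ℝ) / k - ((S j).card : ℝ) / k) * q ^ (j + 1) := by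
        ring
      rw [hsplit] at hstep
      have hpace : ((j + 1 : ℕ) : ℝ) / p * q ^ (j + 1)
          = (j : ℝ) / p * q ^ (j + 1) + (q ^ j - q ^ (j + 1)) := by
        rw [hpow]
        push_cast
        ring
      have hdrop : 0 ≤ q ^ j - q ^ (j + 1) := by
        rw [hpow]
        positivity
      rcases le_or_gt ((j : ℝ) / p) (((S j).card : ℝ) / k) with hahead | hbehind
      · have hsurplus :=
          mul_nonneg hOPT0 (mul_nonneg (sub_nonneg.2 hahead) hdrop)
        linear_combination ih' + hstep + hsurplus - f O * hpace
      · have hj : 1 ≤ j := by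
          -- at `j = 0` the pace is `0`, and one cannot be behind it
          rcases Nat.eq_zero_or_pos j with rfl | h
          · simp [hS0] at hbehind
          · exact h
        have hlt : (S j).card < k := by
          have hle : (j : ℝ) / p ≤ 1 :=
            (div_le_one hp0).2 (by exact_mod_cast (by omega : j ≤ p))
          exact_mod_cast (div_lt_one hk0).1 (hbehind.trans_le hle)
        have hc := hcert j hj (by omega) hlt
        have hdeficit := mul_nonneg hOPT0 (mul_nonneg (sub_nonneg.2 hbehind.le) hQ)
        linear_combination hc + hstep + hdeficit - f O * hpace
  rcases hcard.lt_or_eq with hlt | heq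
  · exact hcert p hp le_rfl hlt
  · have h := hinv p le_rfl
    rw [heq, div_self hk0.ne', div_self hp0.ne'] at h
    linarith
end

section
/- Let k ≥ 1 be an integer and set γ = 10⁻², η = 5·10⁻⁵. Let f : Finset E → ℝ be normalized, non-negative, monotone, submodular. Let O, D, S be finsets and OPT ≥ 0 a real with f(O) = OPT, |D| ≤ η·k and f(D) ≥ (1−γ)/2 · OPT. Let O_R ⊆ O satisfy |O_R| ≤ 0.15·k and f(O_R|D) ≥ 0.05 · f(O|D). Assume f(e|S) ≤ 100·OPT/k for every e ∈ D, and f(e|S) ≤ OPT/(10k) for every e ∈ O_R. Then f(S) ≥ 0.50025 · OPT. -/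
open Finset

/-!
By submodularity, adding a set to (a superset of) `S` gains at most the sum of the marginal values
over `S` of its elements (`union_le_add_card_mul`). Hence adding `D` and then `O_R` to `S` gains at
most `|D| · 100 OPT/k + |O_R| · OPT/(10k) ≤ (0.005 + 0.015) OPT`, so
`f (O_R ∪ D) ≤ f S + 0.02 OPT`. On the other hand
`f (O_R ∪ D) ≥ 0.95 f D + 0.05 f (O ∪ D) ≥ (0.95 · 0.495 + 0.05) OPT = 0.52025 OPT`.
-/

/-- The base set `A` may be larger than the set `S` at which the marginals are bounded, so that the
bound can be applied to several sets in succession. -/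
lemma union_le_add_card_mul {E : Type*} [DecidableEq E] {f : Finset E → ℝ}
    (hmono : ∀ X Y : Finset E, X ⊆ Y → f X ≤ f Y)
    (hsubmod : ∀ X Y : Finset E, X ⊆ Y → ∀ e ∉ Y,
      f (insert e Y) - f Y ≤ f (insert e X) - f X)
    {S A : Finset E} (hSA : S ⊆ A) {c : ℝ} (T : Finset E)
    (hT : ∀ e ∈ T, f (insert e S) - f S ≤ c) :
    f (A ∪ T) ≤ f A + T.card * c := by
  induction T using Finset.induction_on with
  | empty => simp
  | insert e T he ih =>
    have ih' := ih fun x hx => hT x (mem_insert_of_mem hx)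
    have hc := hT e (mem_insert_self e T)
    rw [union_insert, card_insert_of_notMem he]
    push_cast
    by_cases hmem : e ∈ A ∪ T
    · rw [insert_eq_of_mem hmem]
      have := hmono S (insert e S) (subset_insert e S)
      linarith
    · have := hsubmod S (A ∪ T) (hSA.trans subset_union_left) e hmem
      linarith

/-- The |S| < k case of the dense-instance algorithm analysis. -/
theorem stmt_12 {E : Type*} [DecidableEq E]
    (k : ℕ) (hk : 1 ≤ k)
    (γ η : ℝ) (hγ : γ = 1e-2) (hη : η = 5e-5)
    (f : Finset E → ℝ)
    (hnorm : f ∅ = 0)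
    (hnonneg : ∀ X : Finset E, 0 ≤ f X)
    (hmono : ∀ X Y : Finset E, X ⊆ Y → f X ≤ f Y)
    (hsubmod : ∀ X Y : Finset E, X ⊆ Y → ∀ e ∉ Y,
      f (insert e Y) - f Y ≤ f (insert e X) - f X)
    (O D S O_R : Finset E) (OPT : ℝ) (hOPT0 : 0 ≤ OPT)
    (hOPT : f O = OPT)
    (hDcard : (D.card : ℝ) ≤ η * k)
    (hDval : f D ≥ (1 - γ) / 2 * OPT)
    (hORsub : O_R ⊆ O)
    (hORcard : (O_R.card : ℝ) ≤ 0.15 * k)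
    (hORval : f (O_R ∪ D) - f D ≥ 0.05 * (f (O ∪ D) - f D))
    (hD : ∀ e ∈ D, f (insert e S) - f S ≤ 100 * OPT / k)
    (hOR : ∀ e ∈ O_R, f (insert e S) - f S ≤ OPT / (10 * k)) :
    f S ≥ 0.50025 * OPT := by
  subst hγ hη
  have hk0 : (0 : ℝ) < k := by exact_mod_cast hk
  have h1 := union_le_add_card_mul hmono hsubmod (Subset.refl S) D hD
  have h2 := union_le_add_card_mul hmono hsubmod (subset_union_left (s₂ := D)) O_R hOR
  have h3 : (D.card : ℝ) * (100 * OPT / k) ≤ 0.005 * OPT := by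
    calc (D.card : ℝ) * (100 * OPT / k) ≤ (5e-5 * k) * (100 * OPT / k) := by gcongr
      _ = 0.005 * OPT := by field_simp; ring
  have h4 : (O_R.card : ℝ) * (OPT / (10 * k)) ≤ 0.015 * OPT := by
    calc (O_R.card : ℝ) * (OPT / (10 * k)) ≤ (0.15 * k) * (OPT / (10 * k)) := by gcongr
      _ = 0.015 * OPT := by field_simp; ring
  have h5 : f (O_R ∪ D) ≤ f (S ∪ D ∪ O_R) := hmono _ _ (by grind)
  have h6 : f O ≤ f (O ∪ D) := hmono _ _ subset_union_left
  norm_num at hDval hORval h3 h4 ⊢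
  linarith
end

section
/- Let k ≥ 100 be an integer and set γ = 10⁻², η = 5·10⁻⁵. Let f : Finset E → ℝ be non-negative, monotone, submodular. Let D, D_L, S_L, S_R be finsets and OPT ≥ 0 a real with f(D) ≥ (1−γ)/2 · OPT. Assume S_L ∩ S_R = ∅, |S_L| < k/100, |S_L| + |S_R| = k, D_L ⊆ D with |D_L| ≤ 0.95·η·k and f(D_L) ≥ 0.85 · f(D), f(e|S_L) ≤ 100·OPT/k for every e ∈ D_L, and f(S_L ∪ S_R) ≥ f(S_L) + |S_R| · OPT/(10k). Then f(S_L ∪ S_R) ≥ 0.515 · OPT. -/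
open Finset

/-!
Every element of `D_L` has marginal at most `100 * OPT / k` over `S_L`, so by submodularity
(`submod_union_le`) adding all of `D_L` gains at most `0.95 * η * 100 * OPT = 0.00475 * OPT`.
Monotonicity then yields
`f S_L ≥ f D_L - 0.00475 * OPT ≥ (0.85 * 0.495 - 0.00475) * OPT = 0.416 * OPT`.
Since `S_R` has more than `0.99 * k` elements, it contributes at least a further `0.099 * OPT`,
and `0.416 + 0.099 = 0.515` exactly.
-/

/-- The gain of a submodular function from adding a set `T` to `S` is at most `#T` times a bound
on the single-element marginals over `S`. The bound `c` must be non-negative because elements of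
`T` may already lie in `S`. -/
theorem submod_union_le {E : Type*} [DecidableEq E] (f : Finset E → ℝ)
    (hsubmod : ∀ X Y : Finset E, X ⊆ Y → ∀ e ∉ Y,
      f (insert e Y) - f Y ≤ f (insert e X) - f X)
    (S : Finset E) (c : ℝ) (hc : 0 ≤ c) (T : Finset E)
    (hT : ∀ e ∈ T, f (insert e S) - f S ≤ c) :
    f (S ∪ T) ≤ f S + (T.card : ℝ) * c := by
  induction T using Finset.induction_on with
  | empty => simp
  | insert a T ha ih =>
    have h1 := ih fun e he => hT e (mem_insert_of_mem he)
    have h2 := hT a (mem_insert_self a T)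
    rw [card_insert_of_notMem ha, union_insert]
    push_cast
    by_cases haS : a ∈ S ∪ T
    · rw [insert_eq_of_mem haS]
      linarith
    · have h3 := hsubmod S (S ∪ T) subset_union_left a haS
      linarith


/-- The |S| = k case of the dense-instance algorithm analysis. -/
theorem stmt_13 {E : Type*} [DecidableEq E]
    (k : ℕ) (hk : 100 ≤ k)
    (γ η : ℝ) (hγ : γ = 1e-2) (hη : η = 5e-5)
    (f : Finset E → ℝ)
    (hnonneg : ∀ X : Finset E, 0 ≤ f X)
    (hmono : ∀ X Y : Finset E, X ⊆ Y → f X ≤ f Y)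
    (hsubmod : ∀ X Y : Finset E, X ⊆ Y → ∀ e ∉ Y,
      f (insert e Y) - f Y ≤ f (insert e X) - f X)
    (D D_L S_L S_R : Finset E) (OPT : ℝ) (hOPT0 : 0 ≤ OPT)
    (hDval : f D ≥ (1 - γ) / 2 * OPT)
    (hdisj : S_L ∩ S_R = ∅)
    (hSLcard : (S_L.card : ℝ) < (k : ℝ) / 100)
    (hfull : S_L.card + S_R.card = k)
    (hDLsub : D_L ⊆ D)
    (hDLcard : (D_L.card : ℝ) ≤ 0.95 * η * k)
    (hDLval : f D_L ≥ 0.85 * f D)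
    (hthr : ∀ e ∈ D_L, f (insert e S_L) - f S_L ≤ 100 * OPT / k)
    (hSR : f (S_L ∪ S_R) ≥ f S_L + (S_R.card : ℝ) * (OPT / (10 * k))) :
    f (S_L ∪ S_R) ≥ 0.515 * OPT := by
  have hk0 : (0 : ℝ) < k := by
    have : 0 < k := by omega
    exact_mod_cast this
  subst hγ hη
  have hc : 0 ≤ 100 * OPT / k := by positivity
  have hunion := submod_union_le f hsubmod S_L _ hc D_L hthr
  have hDL : f D_L ≤ f (S_L ∪ D_L) := hmono _ _ subset_union_right
  have hloss : (D_L.card : ℝ) * (100 * OPT / k) ≤ 0.00475 * OPT := by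
    calc (D_L.card : ℝ) * (100 * OPT / k)
        ≤ (0.95 * 5e-5 * k) * (100 * OPT / k) := mul_le_mul_of_nonneg_right hDLcard hc
      _ = 0.00475 * OPT := by field_simp; ring
  have hSRcard : 0.99 * (k : ℝ) ≤ S_R.card := by
    have : (S_L.card : ℝ) + S_R.card = k := by exact_mod_cast hfull
    linarith
  have hgain : 0.099 * OPT ≤ (S_R.card : ℝ) * (OPT / (10 * k)) := by
    calc 0.099 * OPT = (0.99 * (k : ℝ)) * (OPT / (10 * k)) := by field_simp; ring
      _ ≤ _ := mul_le_mul_of_nonneg_right hSRcard (by positivity)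
  linarith
end
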